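/- arXiv:1406.3844 — 2 statements merged into one kernel-verified Lean document; each statement's English description precedes it below -/
import Mathlib

section
/- For all integers p ≥ 2 with p ≠ 4 and all m ≥ 2, the distinguishing number of the circulant graph C(m,p) is at most m + 1. -/
/-- A permutation of the vertices is a graph automorphism if it preserves adjacency. -/
def IsGraphAut {V : Type*} (G : SimpleGraph V) (σ : Equiv.Perm V) : Prop :=
  ∀ u v : V, G.Adj (σ u) (σ v) ↔ G.Adj u v

/-- A labeling with `r` labels is distinguishing if no nontrivial automorphism preserves it. -/
def IsDistinguishing {V : Type*} (G : SimpleGraph V) {r : ℕ} (c : V → Fin r) : Prop :=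
  ∀ σ : Equiv.Perm V, IsGraphAut G σ → (∀ v, c (σ v) = c v) → σ = Equiv.refl V

/-- The distinguishing number of a graph: the least `r` admitting an `r`-distinguishing
labeling. -/
noncomputable def distinguishingNumber {V : Type*} (G : SimpleGraph V) : ℕ :=
  sInf {r : ℕ | ∃ c : V → Fin r, IsDistinguishing G c}

/-- The jump set `A = {p-1+r·p, p+1+r·p : 0 ≤ r ≤ m-1}` inside `ℤ_{mp}`. -/
def jumpSet (m p : ℕ) : Set (ZMod (m * p)) :=
  {a | ∃ r < m, a = ((p - 1 + r * p : ℕ) : ZMod (m * p)) ∨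
                a = ((p + 1 + r * p : ℕ) : ZMod (m * p))}

/-- The circulant graph `C(m,p)` on vertex set `ℤ_{mp}`: `i` and `j` are adjacent iff
`j - i (mod mp)` lies in the jump set. -/
def circC (m p : ℕ) : SimpleGraph (ZMod (m * p)) :=
  SimpleGraph.circulantGraph (jumpSet m p)

/-- The set `M_i = {i + r·p : 0 ≤ r ≤ m-1}` in `ℤ_{mp}`. -/
def Mset (m p i : ℕ) : Set (ZMod (m * p)) :=
  {v | ∃ r < m, v = ((i + r * p : ℕ) : ZMod (m * p))}

/-!
Reduction modulo `p` exhibits `C(m,p)` as the blow-up of the cycle `ℤ_p`: every vertex is replaced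
by `m` independent copies. The cycle has no twins (distinct vertices with equal neighbourhoods)
when `p ≠ 4`, so the fibres are the twin classes of the blow-up and each of its automorphisms
induces one of the cycle.

Label the fibre over `w` bijectively by all of the `m + 1` labels except `d w`, where `d` is a
distinguishing labeling of the cycle. A label-preserving automorphism of the blow-up preserves the
set of labels on each fibre, so the induced automorphism preserves `d` and is trivial; thus all
fibres are fixed, and then all vertices. A distinguishing `d` with three labels exists: give `0` and
`1` labels of their own.
-/

open Function Set SimpleGraph

section BlowUp

variable {V W : Type*} {G : SimpleGraph V} {H : SimpleGraph W} {π : V → W} {σ : Equiv.Perm V}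
  {m r s : ℕ}

theorem distinguishingNumber_le {c : V → Fin r} (hc : IsDistinguishing G c) :
    distinguishingNumber G ≤ r :=
  Nat.sInf_le ⟨c, hc⟩

theorem IsDistinguishing.comp_injective {c : V → Fin r} (hc : IsDistinguishing G c)
    {f : Fin r → Fin s} (hf : Injective f) : IsDistinguishing G (f ∘ c) :=
  fun σ hσ hfix => hc σ hσ fun v => hf (hfix v)

theorem IsGraphAut.neighborSet_eq_iff (hσ : IsGraphAut G σ) {u v : V} :
    G.neighborSet (σ u) = G.neighborSet (σ v) ↔ G.neighborSet u = G.neighborSet v := by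
  simp only [Set.ext_iff, mem_neighborSet]
  rw [σ.surjective.forall]
  simp only [hσ _ _]

theorem neighborSet_comap_eq_iff (hH : Injective H.neighborSet) (hπ : Surjective π) {u v : V} :
    (H.comap π).neighborSet u = (H.comap π).neighborSet v ↔ π u = π v := by
  rw [neighborSet_comap, neighborSet_comap, hπ.preimage_injective.eq_iff, hH.eq_iff]

theorem exists_perm_semiconj (hπ : Surjective π)
    (hσ : ∀ u v, π (σ u) = π (σ v) ↔ π u = π v) : ∃ τ : Equiv.Perm W, Semiconj π σ τ := by
  let e : Quotient (Setoid.ker π) ≃ W := Setoid.quotientKerEquivOfSurjective π hπ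
  let σ' : Equiv.Perm (Quotient (Setoid.ker π)) := Quotient.congr σ fun u v => (hσ u v).symm
  refine ⟨e.symm.trans (σ'.trans e), fun v => ?_⟩
  have he : e.symm (π v) = Quotient.mk _ v := e.symm_apply_apply (Quotient.mk _ v)
  rw [Equiv.trans_apply, he]
  rfl

theorem IsGraphAut.exists_isGraphAut_semiconj (hσ : IsGraphAut (H.comap π) σ)
    (hH : Injective H.neighborSet) (hπ : Surjective π) :
    ∃ τ : Equiv.Perm W, IsGraphAut H τ ∧ Semiconj π σ τ := by
  obtain ⟨τ, hτ⟩ := exists_perm_semiconj hπ fun u v => by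
    rw [← neighborSet_comap_eq_iff hH hπ, hσ.neighborSet_eq_iff, neighborSet_comap_eq_iff hH hπ]
  refine ⟨τ, hπ.forall₂.2 fun u v => ?_, hτ⟩
  rw [← hτ u, ← hτ v]
  exact hσ u v

theorem image_fiber_eq_of_semiconj {α : Type*} {τ : Equiv.Perm W} (hτ : Semiconj π σ τ)
    {c : V → α} (hc : ∀ v, c (σ v) = c v) (w : W) : c '' (π ⁻¹' {τ w}) = c '' (π ⁻¹' {w}) := by
  have hfiber : π ⁻¹' {τ w} = σ '' (π ⁻¹' {w}) := by
    rw [σ.image_eq_preimage_symm]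
    ext v
    obtain ⟨u, rfl⟩ := σ.surjective v
    simp [hτ u]
  rw [hfiber, image_image]
  exact image_congr fun v _ => hc v

theorem IsDistinguishing.comap {d : W → Fin s} (hd : IsDistinguishing H d)
    (hH : Injective H.neighborSet) (hπ : Surjective π) {c : V → Fin r}
    (hinj : ∀ w, InjOn c (π ⁻¹' {w}))
    (himage : ∀ w w', c '' (π ⁻¹' {w}) = c '' (π ⁻¹' {w'}) → d w = d w') :
    IsDistinguishing (H.comap π) c := by
  intro σ hσ hc
  obtain ⟨τ, hτ, hστ⟩ := hσ.exists_isGraphAut_semiconj hH hπ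
  obtain rfl : τ = Equiv.refl W :=
    hd τ hτ fun w => himage _ _ (image_fiber_eq_of_semiconj hστ hc w)
  exact Equiv.ext fun v => hinj (π v) (hστ v) rfl (hc v)

theorem exists_bijOn_fiber_compl_singleton (hm : m ≠ 0) (hπ : ∀ w, (π ⁻¹' {w}).ncard = m)
    (d : W → Fin (m + 1)) : ∃ c : V → Fin (m + 1), ∀ w, BijOn c (π ⁻¹' {w}) {d w}ᶜ := by
  have hbij (w : W) : ∃ f : V → Fin (m + 1), BijOn f (π ⁻¹' {w}) {d w}ᶜ := by
    have hfin : (π ⁻¹' {w}).Finite := finite_of_ncard_ne_zero (by rwa [hπ])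
    refine hfin.exists_bijOn_of_encard_eq ?_
    rw [← hfin.cast_ncard_eq, ← (toFinite {d w}ᶜ).cast_ncard_eq, hπ, ncard_compl, ncard_singleton,
      Nat.card_fin, Nat.add_sub_cancel]
  choose f hf using hbij
  refine ⟨fun v => f (π v) v, fun w => (hf w).congr ?_⟩
  rintro v rfl
  rfl

theorem distinguishingNumber_comap_le (hH : Injective H.neighborSet) (hm : m ≠ 0)
    (hπ : ∀ w, (π ⁻¹' {w}).ncard = m) {d : W → Fin (m + 1)} (hd : IsDistinguishing H d) :
    distinguishingNumber (H.comap π) ≤ m + 1 := by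
  obtain ⟨c, hc⟩ := exists_bijOn_fiber_compl_singleton hm hπ d
  have hsurj : Surjective π := fun w =>
    nonempty_of_ncard_ne_zero (s := π ⁻¹' {w}) (by rwa [hπ])
  refine distinguishingNumber_le (hd.comap hH hsurj (fun w => (hc w).injOn) fun w w' h => ?_)
  rwa [(hc w).image_eq, (hc w').image_eq, compl_inj_iff, singleton_eq_singleton_iff] at h

end BlowUp

section Circulant

theorem circulantGraph_preimage {A B : Type*} [AddGroup A] [AddGroup B] (f : A →+ B) {s : Set B}
    (hs : 0 ∉ s) : circulantGraph (f ⁻¹' s) = (circulantGraph s).comap f := by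
  ext x y
  simp only [circulantGraph_adj, comap_adj, mem_preimage, map_sub]
  refine and_congr_left fun hjump => ⟨fun _ hxy => hs ?_, ne_of_apply_ne f⟩
  simpa only [hxy, sub_self, or_self] using hjump

variable {A : Type*} [AddCommGroup A] {g : A}

theorem circulantGraph_singleton_adj (hg : g ≠ 0) {x y : A} :
    (circulantGraph {g}).Adj x y ↔ y = x + g ∨ y = x - g := by
  simp only [circulantGraph_adj, mem_singleton_iff]
  grind

theorem injective_neighborSet_circulantGraph_singleton (hg : g ≠ 0)
    (h4 : 4 • g = 0 → 2 • g = 0) : Injective (circulantGraph {g}).neighborSet := by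
  intro x y h
  simp only [Set.ext_iff, mem_neighborSet, circulantGraph_singleton_adj hg] at h
  rcases (h (x + g)).1 (Or.inl rfl) with hx | hx
  · exact add_right_cancel hx
  rcases (h (y + g)).2 (Or.inl rfl) with hy | hy
  · exact (add_right_cancel hy).symm
  have hyx : y = x + 2 • g := by grind
  have hfour : 4 • g = 0 := by grind
  rw [hyx, h4 hfour, add_zero]

theorem IsGraphAut.eq_refl_of_circulantGraph_singleton (hg : g ≠ 0)
    (hgen : ∀ x, x ∈ AddSubmonoid.multiples g) {σ : Equiv.Perm A}
    (hσ : IsGraphAut (circulantGraph {g}) σ) (hσ0 : σ 0 = 0) (hσg : σ g = g) :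
    σ = Equiv.refl A := by
  have hstep (x : A) (hx : σ x = x) (hxg : σ (x + g) = x + g) : σ (x + g + g) = x + g + g := by
    have hadj : (circulantGraph {g}).Adj (σ (x + g)) (σ (x + g + g)) :=
      (hσ _ _).2 ((circulantGraph_singleton_adj hg).2 (Or.inl rfl))
    rw [hxg, circulantGraph_singleton_adj hg, add_sub_cancel_right] at hadj
    rcases hadj with hforward | hback
    · exact hforward
    · have hcycle : x + g + g = x := σ.injective (hback.trans hx.symm)
      rw [hcycle, hx]
  have hfix (n : ℕ) : σ (n • g) = n • g ∧ σ (n • g + g) = n • g + g := by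
    induction n with
    | zero => simp [hσ0, hσg]
    | succ n ih =>
      rw [succ_nsmul]
      exact ⟨ih.2, hstep _ ih.1 ih.2⟩
  refine Equiv.ext fun x => ?_
  obtain ⟨n, rfl⟩ := AddSubmonoid.mem_multiples_iff .. |>.1 (hgen x)
  exact (hfix n).1

theorem isDistinguishing_circulantGraph_singleton (hg : g ≠ 0)
    (hgen : ∀ x, x ∈ AddSubmonoid.multiples g) {r : ℕ} {c : A → Fin r}
    (h0 : ∀ x, c x = c 0 → x = 0) (hcg : ∀ x, c x = c g → x = g) :
    IsDistinguishing (circulantGraph {g}) c :=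
  fun _ hσ hc => hσ.eq_refl_of_circulantGraph_singleton hg hgen (h0 _ (hc 0)) (hcg _ (hc g))

open Classical in
theorem exists_isDistinguishing_circulantGraph_singleton (hg : g ≠ 0)
    (hgen : ∀ x, x ∈ AddSubmonoid.multiples g) :
    ∃ d : A → Fin 3, IsDistinguishing (circulantGraph {g}) d :=
  ⟨fun x => if x = 0 then 0 else if x = g then 1 else 2,
    isDistinguishing_circulantGraph_singleton hg hgen (by grind) (by grind)⟩

end Circulant

theorem ncard_fiber_mul_card {A B : Type*} [AddGroup A] [AddGroup B] {f : A →+ B}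
    (hf : Surjective f) (b : B) : (f ⁻¹' {b}).ncard * Nat.card B = Nat.card A := by
  rw [← Nat.card_coe_set_eq, Nat.card_congr (AddMonoidHom.fiberEquivKerOfSurjective hf b),
    ← f.ker.card_mul_index, AddSubgroup.index_ker, AddMonoidHom.range_eq_top.2 hf,
    AddSubgroup.card_top]

section Reduction

/-- The reduction `ℤ_{mp} → ℤ_p`, whose fibres are the sets `M_i`. -/
abbrev reduction (m p : ℕ) : ZMod (m * p) →+* ZMod p :=
  ZMod.castHom (dvd_mul_left p m) (ZMod p)

variable {m p : ℕ}

theorem Mset_eq_reduction_preimage (hm : m ≠ 0) (i : ℕ) :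
    Mset m p i = reduction m p ⁻¹' {(i : ZMod p)} := by
  ext v
  constructor
  · rintro ⟨r, -, rfl⟩
    simp
  · intro hv
    obtain ⟨k, rfl⟩ := ZMod.intCast_surjective v
    obtain ⟨q, hq⟩ : (p : ℤ) ∣ k - i := by
      rw [← ZMod.intCast_eq_intCast_iff_dvd_sub]
      simpa using hv.symm
    have hmod : ((q % m).toNat : ℤ) = q % m := Int.toNat_of_nonneg (Int.emod_nonneg q (by omega))
    have hlt : q % m < m := Int.emod_lt_of_pos q (by omega)
    refine ⟨(q % m).toNat, by omega, ?_⟩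
    rw [← Int.cast_natCast (R := ZMod (m * p)), ZMod.intCast_eq_intCast_iff_dvd_sub]
    refine ⟨-(q / m), ?_⟩
    push_cast
    rw [hmod]
    linear_combination -hq + p * Int.mul_ediv_add_emod q m

theorem jumpSet_eq_reduction_preimage (hm : m ≠ 0) (hp : p ≠ 0) :
    jumpSet m p = reduction m p ⁻¹' ({1} ∪ -{1}) := by
  have hunion : jumpSet m p = Mset m p (p + 1) ∪ Mset m p (p - 1) := by
    ext a
    simp only [jumpSet, Mset, mem_ofPred_eq, mem_union]
    grind
  rw [hunion, Mset_eq_reduction_preimage hm, Mset_eq_reduction_preimage hm, ← preimage_union,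
    Nat.cast_pred (by omega)]
  simp

theorem circC_eq_comap_reduction (hm : m ≠ 0) (hp : 2 ≤ p) :
    circC m p = (circulantGraph {(1 : ZMod p)}).comap (reduction m p) := by
  have : Fact (1 < p) := ⟨hp⟩
  rw [circC, jumpSet_eq_reduction_preimage hm (by omega), circulantGraph_eq_symm {(1 : ZMod p)}]
  exact circulantGraph_preimage (reduction m p).toAddMonoidHom (by simp)

theorem ncard_reduction_fiber (hp : p ≠ 0) (i : ZMod p) :
    (reduction m p ⁻¹' {i}).ncard = m := by
  have h := ncard_fiber_mul_card
    (f := (reduction m p).toAddMonoidHom) (ZMod.ringHom_surjective _) i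
  rw [Nat.card_zmod, Nat.card_zmod] at h
  exact Nat.eq_of_mul_eq_mul_right (by omega) h

theorem two_nsmul_eq_zero_of_four_nsmul_eq_zero (hp4 : p ≠ 4) (h : 4 • (1 : ZMod p) = 0) :
    2 • (1 : ZMod p) = 0 := by
  simp only [nsmul_one, ZMod.natCast_eq_zero_iff] at h ⊢
  have hle : p ≤ 4 := Nat.le_of_dvd (by norm_num) h
  interval_cases p <;> omega

theorem mem_multiples_one [NeZero p] (x : ZMod p) : x ∈ AddSubmonoid.multiples (1 : ZMod p) :=
  AddSubmonoid.mem_multiples_iff .. |>.2 ⟨x.val, by simp⟩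

end Reduction

theorem stmt_7 (m p : ℕ) (hm : 2 ≤ m) (hp : 2 ≤ p) (hp4 : p ≠ 4) :
    distinguishingNumber (circC m p) ≤ m + 1 := by
  have : Fact (1 < p) := ⟨hp⟩
  have : NeZero p := ⟨by omega⟩
  have hm0 : m ≠ 0 := by omega
  have htwins : Injective (circulantGraph {(1 : ZMod p)}).neighborSet :=
    injective_neighborSet_circulantGraph_singleton one_ne_zero
      (two_nsmul_eq_zero_of_four_nsmul_eq_zero hp4)
  obtain ⟨d, hd⟩ :=
    exists_isDistinguishing_circulantGraph_singleton (one_ne_zero (α := ZMod p)) mem_multiples_one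
  have hlabels : 3 ≤ m + 1 := by omega
  rw [circC_eq_comap_reduction hm0 hp]
  exact distinguishingNumber_comap_le htwins hm0 (ncard_reduction_fiber (NeZero.ne p))
    (hd.comp_injective (Fin.castLE_injective hlabels))
end

section
/- For every integer m ≥ 2, the distinguishing number of the circulant graph C(m,4) equals 2m + 1. -/
section General

variable {V W : Type*} {G : SimpleGraph V} {H : SimpleGraph W} {r : ℕ}

lemma IsDistinguishing.comp_iso {c : W → Fin r} (hc : IsDistinguishing H c) (f : G ≃g H) :
    IsDistinguishing G (c ∘ f) := by
  intro σ hσ hcσ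
  have hconj : f.toEquiv.permCongr σ = Equiv.refl W := by
    refine hc _ (fun u v => ?_) fun w => ?_
    · exact (f.map_adj_iff.trans (hσ _ _)).trans f.symm.map_adj_iff
    · exact (hcσ (f.symm w)).trans (congrArg c (f.apply_symm_apply w))
  exact f.toEquiv.permCongr.injective (hconj.trans (Equiv.permCongr_refl _).symm)

lemma distinguishingNumber_congr (f : G ≃g H) :
    distinguishingNumber G = distinguishingNumber H := by
  refine congrArg sInf (Set.ext fun r => ⟨?_, ?_⟩)
  · rintro ⟨c, hc⟩
    exact ⟨_, hc.comp_iso f.symm⟩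
  · rintro ⟨c, hc⟩
    exact ⟨_, hc.comp_iso f⟩

lemma isGraphAut_swap [DecidableEq V] {u v : V} (h : ∀ w, G.Adj u w ↔ G.Adj v w) :
    IsGraphAut G (Equiv.swap u v) := by
  have hleft : ∀ a b, G.Adj (Equiv.swap u v a) b ↔ G.Adj a b := by
    intro a b
    rw [Equiv.swap_apply_def]
    split_ifs with hau hav
    · rw [hau, h]
    · rw [hav, h]
    · rfl
  intro a b
  rw [hleft, G.adj_comm, hleft, G.adj_comm]

lemma IsDistinguishing.eq_of_twins {c : V → Fin r} (hc : IsDistinguishing G c) {u v : V}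
    (h : ∀ w, G.Adj u w ↔ G.Adj v w) (hcuv : c u = c v) : u = v := by
  classical
  refine Equiv.swap_eq_refl_iff.mp (hc _ (isGraphAut_swap h) fun w => ?_)
  rw [Equiv.swap_apply_def]
  split_ifs with hwu hwv
  · rw [hwu, hcuv]
  · rw [hwv, hcuv]
  · rfl

end General

section CompleteBipartite

variable {α β : Type*} {r : ℕ} {c : α ⊕ β → Fin r}

lemma IsDistinguishing.injective_comp_inl (hc : IsDistinguishing (completeBipartiteGraph α β) c) :
    Function.Injective (c ∘ Sum.inl) := fun _ _ h =>
  Sum.inl_injective (hc.eq_of_twins (by simp) h)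

lemma IsDistinguishing.injective_comp_inr (hc : IsDistinguishing (completeBipartiteGraph α β) c) :
    Function.Injective (c ∘ Sum.inr) := fun _ _ h =>
  Sum.inr_injective (hc.eq_of_twins (by simp) h)

lemma IsDistinguishing.exists_inr_ne_inl [Nonempty α]
    (hc : IsDistinguishing (completeBipartiteGraph α β) c) (e : α ≃ β) :
    ∃ a, c (Sum.inr (e a)) ≠ c (Sum.inl a) := by
  by_contra! h
  let σ : Equiv.Perm (α ⊕ β) := (Equiv.sumCongr e e.symm).trans (Equiv.sumComm β α)
  have hσ : σ = Equiv.refl _ := by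
    refine hc σ ?_ ?_
    · rintro (a | b) (a' | b') <;> simp [σ]
    · rintro (a | b)
      · exact h a
      · simpa [σ] using (h (e.symm b)).symm
  obtain ⟨a⟩ := ‹Nonempty α›
  exact Sum.inr_ne_inl (DFunLike.congr_fun hσ (Sum.inl a))

lemma IsDistinguishing.card_lt [Finite α] [Nonempty α]
    (hc : IsDistinguishing (completeBipartiteGraph α β) c) (e : α ≃ β) : Nat.card α < r := by
  have hle : Nat.card α ≤ r := by
    simpa using Nat.card_le_card_of_injective _ hc.injective_comp_inl
  refine hle.lt_of_ne fun hr => ?_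
  have hbij : ∀ f : α → Fin r, Function.Injective f → Function.Bijective f := fun f hf =>
    hf.bijective_of_nat_card_le (by simp [hr])
  let left := Equiv.ofBijective _ (hbij _ hc.injective_comp_inl)
  let right := Equiv.ofBijective _ (hbij _ (hc.injective_comp_inr.comp e.injective))
  obtain ⟨a, ha⟩ := hc.exists_inr_ne_inl ((left.trans right.symm).trans e)
  exact ha (right.apply_symm_apply (left a))

lemma IsGraphAut.isRight_apply {σ : Equiv.Perm (α ⊕ β)}
    (hσ : IsGraphAut (completeBipartiteGraph α β) σ) {a : α} (ha : σ (Sum.inl a) = Sum.inl a)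
    (v : α ⊕ β) : (σ v).isRight = v.isRight :=
  Bool.eq_iff_iff.mpr (by simpa [ha] using hσ (Sum.inl a) v)

/-- The labeling of `K_{n,n}` by `n + 1` labels omitting the last label on the left side and the
first one on the right side; the sides are numbered by `f` and `g`. -/
def offsetLabeling {n : ℕ} (f : α ≃ Fin n) (g : β ≃ Fin n) : α ⊕ β → Fin (n + 1) :=
  Sum.elim (Fin.castSucc ∘ f) (Fin.succ ∘ g)

lemma isDistinguishing_offsetLabeling {n : ℕ} [NeZero n] (f : α ≃ Fin n) (g : β ≃ Fin n) :
    IsDistinguishing (completeBipartiteGraph α β) (offsetLabeling f g) := by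
  intro σ hσ hc
  have hfix : σ (Sum.inl (f.symm 0)) = Sum.inl (f.symm 0) := by
    have h := hc (Sum.inl (f.symm 0))
    cases hw : σ (Sum.inl (f.symm 0)) with
    | inl a => simpa [offsetLabeling, hw, Equiv.eq_symm_apply] using h
    | inr b => simp [offsetLabeling, hw] at h
  ext1 v
  have hside := hσ.isRight_apply hfix v
  specialize hc v
  cases hv : v <;> cases hw : σ v <;> simp_all [offsetLabeling]

theorem distinguishingNumber_completeBipartiteGraph [Finite α] [Nonempty α] (e : α ≃ β) :
    distinguishingNumber (completeBipartiteGraph α β) = Nat.card α + 1 := by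
  have : NeZero (Nat.card α) := ⟨Nat.card_pos.ne'⟩
  let f := Finite.equivFin α
  refine IsLeast.csInf_eq ⟨⟨_, isDistinguishing_offsetLabeling f (e.symm.trans f)⟩, ?_⟩
  rintro r ⟨c, hc⟩
  exact hc.card_lt e

/-- A graph whose edges are the pairs separated by the predicate `p` is complete bipartite. -/
def completeBipartiteGraphIso {V : Type*} {G : SimpleGraph V} {p : V → Prop} [DecidablePred p]
    (h : ∀ u v, G.Adj u v ↔ ¬(p u ↔ p v)) :
    completeBipartiteGraph {v // p v} {v // ¬p v} ≃g G where
  toEquiv := Equiv.sumCompl p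
  map_rel_iff' := by rintro (⟨u, hu⟩ | ⟨u, hu⟩) (⟨v, hv⟩ | ⟨v, hv⟩) <;> simp [h, hu, hv]

end CompleteBipartite

section Circulant

/-- Reduction mod `p` on the vertices of `C(m,p)`; its fibres are the sets `M_i`. -/
def residue (m p : ℕ) : ZMod (m * p) →+* ZMod p :=
  ZMod.castHom (Nat.dvd_mul_left p m) (ZMod p)

variable {m p : ℕ} [NeZero m]

lemma mem_Mset_iff [NeZero p] {i : ℕ} {v : ZMod (m * p)} :
    v ∈ Mset m p i ↔ residue m p v = i := by
  constructor
  · rintro ⟨r, -, rfl⟩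
    simp [residue]
  · intro h
    have hsub : ((v - (i : ZMod (m * p))).val : ZMod p) = 0 := by
      rw [← map_natCast (residue m p), ZMod.natCast_zmod_val, map_sub, map_natCast, h, sub_self]
    obtain ⟨r, hr⟩ := (ZMod.natCast_eq_zero_iff _ _).mp hsub
    refine ⟨r, ?_, ?_⟩
    · have hlt := ZMod.val_lt (v - (i : ZMod (m * p)))
      rw [hr, mul_comm p] at hlt
      exact lt_of_mul_lt_mul_right hlt p.zero_le
    · rw [Nat.cast_add, mul_comm r, ← hr, ZMod.natCast_zmod_val, add_sub_cancel]

lemma jumpSet_eq_union (m p : ℕ) : jumpSet m p = Mset m p (p - 1) ∪ Mset m p (p + 1) := by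
  ext a
  simp only [jumpSet, Mset, Set.mem_union, Set.mem_ofPred_eq, and_or_left, exists_or]

lemma mem_jumpSet_iff [NeZero p] {a : ZMod (m * p)} :
    a ∈ jumpSet m p ↔ residue m p a = -1 ∨ residue m p a = 1 := by
  simp [jumpSet_eq_union, mem_Mset_iff, Nat.cast_pred (NeZero.pos p)]

lemma circC_adj_iff (hp : 1 < p) {u v : ZMod (m * p)} :
    (circC m p).Adj u v ↔
      residue m p u - residue m p v = 1 ∨ residue m p u - residue m p v = -1 := by
  have := NeZero.of_gt hp
  have := Fact.mk hp
  have hne : residue m p u - residue m p v = 1 ∨ residue m p u - residue m p v = -1 → u ≠ v := by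
    rintro h rfl
    simp at h
  simp only [circC, SimpleGraph.circulantGraph, SimpleGraph.fromRel_adj, mem_jumpSet_iff, map_sub]
  grind

lemma circC_four_adj_iff {u v : ZMod (m * 4)} :
    (circC m 4).Adj u v ↔ ¬(Even (residue m 4 u) ↔ Even (residue m 4 v)) := by
  have hparity : ∀ a b : ZMod 4, a - b = 1 ∨ a - b = -1 ↔ ¬(Even a ↔ Even b) := by
    unfold Even
    decide
  rw [circC_adj_iff (by norm_num), hparity]

/-- Translation by `1` exchanges the two sides of `C(m,4)`. -/
def evenEquivNotEven (m : ℕ) :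
    {v : ZMod (m * 4) // Even (residue m 4 v)} ≃ {v : ZMod (m * 4) // ¬Even (residue m 4 v)} :=
  (Equiv.addRight 1).subtypeEquiv fun v => by
    have hsucc : ∀ a : ZMod 4, Even a ↔ ¬Even (a + 1) := by
      unfold Even
      decide
    simpa using hsucc (residue m 4 v)

lemma card_even_residue : Nat.card {v : ZMod (m * 4) // Even (residue m 4 v)} = 2 * m := by
  classical
  have hsum := Nat.card_congr (Equiv.sumCompl fun v : ZMod (m * 4) => Even (residue m 4 v))
  rw [Nat.card_sum, ← Nat.card_congr (evenEquivNotEven m), Nat.card_zmod] at hsum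
  omega

end Circulant

theorem stmt_10 (m : ℕ) (hm : 2 ≤ m) :
    distinguishingNumber (circC m 4) = 2 * m + 1 := by
  classical
  have : NeZero m := ⟨by omega⟩
  have : Nonempty {v : ZMod (m * 4) // Even (residue m 4 v)} := ⟨0, by simp⟩
  rw [← distinguishingNumber_congr (completeBipartiteGraphIso fun _ _ => circC_four_adj_iff),
    distinguishingNumber_completeBipartiteGraph (evenEquivNotEven m), card_even_residue]
end
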